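/- There exist W₀ and constants K, c > 0, independent of W, such that for all W ≥ W₀, all cubes Λ of side W in ℤ³, and all E ∈ 𝓘: (i) if 0 < f_a ≤ 3/4 and μ_{C_{f_a}} is the centered Gaussian measure on ℝ^Λ with covariance C_{f_a} = (C⁻¹ − f_a m_r²·Id)⁻¹, then μ_{C_{f_a}}({a : ∃ j ∈ Λ with |a_j| > W^{−1/8}}) ≤ K W³ e^{−c W^{7/4}}; (ii) if f_b = 1 − W^{−3} and μ_{C_{f_b}} is the centered Gaussian measure on ℝ^Λ with covariance C_{f_b} = (C⁻¹ − f_b m_r²·Id)⁻¹, then μ_{C_{f_b}}({b : ∃ j, j' ∈ Λ with |b_j − b_{j'}| > W^{−1/8}}) ≤ K W⁶ e^{−c W^{7/4}}. -/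

import Mathlib

open scoped BigOperators Topology
open Matrix MeasureTheory Filter

noncomputable section

/-- The discrete torus of side lengths `L i`; when each `L i` is a positive multiple of `W`,
this is a union of cubes of side `W` (containing `0`) with periodic boundary conditions. -/
abbrev Torus (L : Fin 3 → ℕ) := (i : Fin 3) → ZMod (L i)

/-- Unit lattice vector in direction `i`. -/
def unitVec (L : Fin 3 → ℕ) (i : Fin 3) : Torus L := fun j => if j = i then 1 else 0

/-- Discrete Laplacian with periodic boundary conditions. -/
def lap (L : Fin 3 → ℕ) : Matrix (Torus L) (Torus L) ℝ :=
  Matrix.of fun x y =>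
    (∑ i : Fin 3, ((if y = x + unitVec L i then (1 : ℝ) else 0) +
        (if y = x - unitVec L i then (1 : ℝ) else 0))) - (if y = x then 6 else 0)

/-- Distance to `0` in `ℤ/n`, via the minimal representative. -/
def zdist {n : ℕ} (x : ZMod n) : ℕ := min x.val (n - x.val)

/-- Euclidean distance on the torus. -/
def tdist (L : Fin 3 → ℕ) (x y : Torus L) : ℝ :=
  Real.sqrt (∑ i : Fin 3, ((zdist (x i - y i) : ℝ)) ^ 2)

/-- The band covariance profile `J = (-W²Δ + 1)⁻¹`. -/
def Jmat (L : Fin 3 → ℕ) [∀ i, NeZero (L i)] (W : ℕ) : Matrix (Torus L) (Torus L) ℝ :=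
  (((W : ℝ) ^ 2) • (-lap L) + 1)⁻¹

def mr2 (E : ℝ) : ℝ := 2 * (1 - E ^ 2 / 4)
def mi2 (E : ℝ) : ℝ := E * Real.sqrt (1 - E ^ 2 / 4)
def mr (E : ℝ) : ℝ := Real.sqrt (mr2 E)

/-- `ℰ = E/2 - i√(1 - E²/4)`. -/
def calE (E : ℝ) : ℂ := ((E / 2 : ℝ) : ℂ) - (Real.sqrt (1 - E ^ 2 / 4) : ℝ) * Complex.I
/-- `ℰ̄ = E - ℰ = E/2 + i√(1 - E²/4)`, the complex conjugate of `ℰ`. -/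
def calEbar (E : ℝ) : ℂ := ((E / 2 : ℝ) : ℂ) + (Real.sqrt (1 - E ^ 2 / 4) : ℝ) * Complex.I

/-- `C = (-W²Δ + m_r²)⁻¹`. -/
def Cmat (L : Fin 3 → ℕ) [∀ i, NeZero (L i)] (W : ℕ) (E : ℝ) : Matrix (Torus L) (Torus L) ℝ :=
  (((W : ℝ) ^ 2) • (-lap L) + mr2 E • 1)⁻¹

/-- `B = (C⁻¹ + i m_i²·Id)⁻¹`. -/
def Bmat (L : Fin 3 → ℕ) [∀ i, NeZero (L i)] (W : ℕ) (E : ℝ) : Matrix (Torus L) (Torus L) ℂ :=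
  (((Cmat L W E)⁻¹).map Complex.ofReal + (mi2 E * Complex.I) • 1)⁻¹

/-- The energy window `𝓘 = {E : η ≤ |E| ≤ 1.8}`. -/
def specI (η : ℝ) : Set ℝ := {E : ℝ | η ≤ |E| ∧ |E| ≤ 1.8}

/-- Wigner semicircle density `(1/π)√(1 - E²/4)`. -/
def rhoSC (E : ℝ) : ℝ := Real.sqrt (1 - E ^ 2 / 4) / Real.pi

/-- Real quadratic form `aᵀ M a`. -/
def qf (L : Fin 3 → ℕ) [∀ i, NeZero (L i)] (M : Matrix (Torus L) (Torus L) ℝ)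
    (a : Torus L → ℝ) : ℝ := a ⬝ᵥ M.mulVec a

/-- Characteristic function of a measure on `ℝ^Λ`. -/
def charFun (L : Fin 3 → ℕ) [∀ i, NeZero (L i)] (μ : Measure (Torus L → ℝ))
    (t : Torus L → ℝ) : ℂ :=
  ∫ x, Complex.exp (Complex.I * ((∑ j, t j * x j : ℝ) : ℂ)) ∂μ

/-- `C_f = (C⁻¹ - f m_r²·Id)⁻¹`. -/
def Cf (L : Fin 3 → ℕ) [∀ i, NeZero (L i)] (W : ℕ) (E : ℝ) (f : ℝ) :
    Matrix (Torus L) (Torus L) ℝ :=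
  ((Cmat L W E)⁻¹ - (f * mr2 E) • 1)⁻¹

/-- `μ` is the centered Gaussian measure on `ℝ^Λ` with covariance matrix `M`. -/
def IsCenteredGaussianWithCov (L : Fin 3 → ℕ) [∀ i, NeZero (L i)]
    (μ : Measure (Torus L → ℝ)) (M : Matrix (Torus L) (Torus L) ℝ) : Prop :=
  IsProbabilityMeasure μ ∧
    ∀ t : Torus L → ℝ, charFun L μ t = Complex.exp (-(1 / 2 : ℂ) * ((qf L M t : ℝ) : ℂ))

/-!
Plane waves diagonalise `C_f⁻¹ = -W²Δ + (1 - f) m_r²`, so under the Gaussian measure the linear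
functional `u ⬝ᵥ a` has variance `W⁻³ ∑ₚ |û(p)|² / (W² λ(p) + (1 - f) m_r²)`, where `λ` is the
symbol of `-Δ`. Jordan's inequality gives `W² λ(p) ≥ 16 |p|²`, with `|p|` the distance to `0` on the
torus, and `∑_{p ≠ 0} |p|⁻² = O(W)` in dimension three, so the nonzero modes contribute `O(W⁻²)`.
The zero mode contributes `W⁻³ (∑ₓ u(x))² / ((1 - f) m_r²)`: for `u = δ_j` this is `O(W⁻³)` because
the mass is bounded below, and for `u = δ_j - δ_j'` it vanishes, whatever the mass. A Gaussian of
variance `O(W⁻²)` exceeds `W^(-1/8)` in absolute value with probability at most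
`2 exp (-c W^(2 - 1/4))`; sum over the sites or pairs of sites.
-/

open scoped ComplexConjugate NNReal

section Inequalities

lemma sum_range_rpow_sub_one_le {r : ℝ} (hr₀ : 0 < r) (hr₁ : r ≤ 1) (n : ℕ) :
    ∑ k ∈ Finset.range n, ((k : ℝ) + 1) ^ (r - 1) ≤ (n : ℝ) ^ r / r := by
  induction n with
  | zero => simp [hr₀.ne']
  | succ n ih =>
    have hn : (0 : ℝ) < n + 1 := n.cast_add_one_pos
    have bernoulli : (n : ℝ) ^ r ≤ (n + 1 : ℝ) ^ r - r * (n + 1 : ℝ) ^ (r - 1) := by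
      have hs : -1 ≤ -((n : ℝ) + 1)⁻¹ := neg_le_neg (inv_le_one_of_one_le₀ (by linarith))
      calc (n : ℝ) ^ r = (n + 1 : ℝ) ^ r * (1 + -(n + 1 : ℝ)⁻¹) ^ r := by
            rw [← Real.mul_rpow hn.le (by linarith)]
            congr 1
            field_simp
            ring
        _ ≤ (n + 1 : ℝ) ^ r * (1 + r * -(n + 1 : ℝ)⁻¹) := by
            gcongr
            exact rpow_one_add_le_one_add_mul_self hs hr₀.le hr₁
        _ = (n + 1 : ℝ) ^ r - r * (n + 1 : ℝ) ^ (r - 1) := by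
            rw [Real.rpow_sub_one hn.ne']
            ring
    rw [Finset.sum_range_succ, Nat.cast_succ]
    calc _ ≤ (n : ℝ) ^ r / r + (n + 1 : ℝ) ^ (r - 1) := by gcongr
      _ ≤ (n + 1 : ℝ) ^ r / r := by
        rw [div_add' _ _ _ hr₀.ne', div_le_div_iff_of_pos_right hr₀]
        linarith

-- Trading the radial weight for a product makes the sum over momenta factorise.
lemma inv_four_mul_sum_sq_le_prod {ι : Type*} [Fintype ι] {z : ι → ℝ}
    (hz : ∀ i, 0 ≤ z i) (h : 1 ≤ ∑ i, z i ^ 2) :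
    (4 * ∑ i, z i ^ 2)⁻¹ ≤ ∏ i, (z i + 1) ^ (-(2 / Fintype.card ι : ℝ)) := by
  have : Nonempty ι := by
    by_contra! hempty
    norm_num at h
  set S := ∑ i, z i ^ 2
  have hfactor (i : ι) : (4 * S) ^ (-(1 / Fintype.card ι : ℝ)) ≤
      (z i + 1) ^ (-(2 / Fintype.card ι : ℝ)) := by
    have hzS : (z i + 1) ^ (2 : ℝ) ≤ 4 * S := by
      have : z i ^ 2 ≤ S :=
        Finset.single_le_sum (f := fun i => z i ^ 2) (fun _ _ => sq_nonneg _) (Finset.mem_univ i)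
      rw [Real.rpow_two]
      nlinarith [sq_nonneg (z i - 1)]
    have hz1 : 0 < z i + 1 := by linarith [hz i]
    calc (4 * S) ^ (-(1 / Fintype.card ι : ℝ))
        ≤ ((z i + 1) ^ (2 : ℝ)) ^ (-(1 / Fintype.card ι : ℝ)) :=
          Real.rpow_le_rpow_of_nonpos (by positivity) hzS (by simp)
      _ = (z i + 1) ^ (-(2 / Fintype.card ι : ℝ)) := by
          rw [← Real.rpow_mul hz1.le]
          ring_nf
  have hS : 0 ≤ 4 * S := by linarith
  calc (4 * S)⁻¹ = ∏ _i : ι, (4 * S) ^ (-(1 / Fintype.card ι : ℝ)) := by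
        rw [Finset.prod_const, Finset.card_univ, ← Real.rpow_natCast, ← Real.rpow_mul hS,
          ← Real.rpow_neg_one]
        congr 1
        field_simp
    _ ≤ ∏ i, (z i + 1) ^ (-(2 / Fintype.card ι : ℝ)) :=
        Finset.prod_le_prod (fun _ _ => by positivity) fun i _ => hfactor i

lemma measure_exists_lt_abs_le_of_hasSubgaussianMGF {Ω ι : Type*} [MeasurableSpace Ω] [Fintype ι]
    {μ : Measure Ω} [IsFiniteMeasure μ] {X : ι → Ω → ℝ} {c : ℝ≥0}
    (hX : ∀ i, ProbabilityTheory.HasSubgaussianMGF (X i) c μ) {ε : ℝ} (hε : 0 ≤ ε) :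
    μ {ω | ∃ i, ε < |X i ω|} ≤
      ENNReal.ofReal (2 * Fintype.card ι * Real.exp (-ε ^ 2 / (2 * c))) := by
  have tail (i : ι) :
      μ.real {ω | ε < |X i ω|} ≤ 2 * Real.exp (-ε ^ 2 / (2 * c)) := by
    have hsub : {ω | ε < |X i ω|} ⊆ {ω | ε ≤ X i ω} ∪ {ω | ε ≤ (-X i) ω} := fun ω hω =>
      (lt_abs.1 hω).imp le_of_lt fun h : ε < -X i ω => h.le
    calc μ.real {ω | ε < |X i ω|}
        ≤ μ.real {ω | ε ≤ X i ω} + μ.real {ω | ε ≤ (-X i) ω} :=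
          (measureReal_mono hsub).trans (measureReal_union_le _ _)
      _ ≤ 2 * Real.exp (-ε ^ 2 / (2 * c)) := by
          linarith [(hX i).measure_ge_le hε, (hX i).neg.measure_ge_le hε]
  rw [← ofReal_measureReal, Set.ofPred_exists]
  refine ENNReal.ofReal_le_ofReal ?_
  calc μ.real (⋃ i, {ω | ε < |X i ω|}) ≤ ∑ i, μ.real {ω | ε < |X i ω|} :=
        measureReal_iUnion_fintype_le _
    _ ≤ ∑ _i : ι, 2 * Real.exp (-ε ^ 2 / (2 * c)) := Finset.sum_le_sum fun i _ => tail i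
    _ = 2 * Fintype.card ι * Real.exp (-ε ^ 2 / (2 * c)) := by
        rw [Finset.sum_const, Finset.card_univ, nsmul_eq_mul]
        ring

end Inequalities

section PlaneWave

variable {L : Fin 3 → ℕ} [∀ i, NeZero (L i)]

/-- The plane wave `x ↦ exp (2πi ∑ᵢ pᵢ xᵢ / Lᵢ)`; momenta are indexed by the torus itself, the
components of the physical momentum being `2π pᵢ / Lᵢ`. -/
def planeWave (p : Torus L) : AddChar (Torus L) ℂ where
  toFun x := ∏ i, ZMod.stdAddChar (p i * x i)
  map_zero_eq_one' := by simp
  map_add_eq_mul' x y := by simp [mul_add, AddChar.map_add_eq_mul, Finset.prod_mul_distrib]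

lemma planeWave_apply (p x : Torus L) : planeWave p x = ∏ i, ZMod.stdAddChar (p i * x i) := rfl

lemma planeWave_comm (p x : Torus L) : planeWave p x = planeWave x p := by
  simp only [planeWave_apply, mul_comm]

lemma planeWave_zero : planeWave (0 : Torus L) = 0 := by
  ext x
  simp [planeWave_apply]

lemma planeWave_unitVec (p : Torus L) (i : Fin 3) :
    planeWave p (unitVec L i) = ZMod.stdAddChar (p i) := by
  rw [planeWave_apply, Finset.prod_eq_single i (fun j _ hj => by simp [unitVec, hj]) (by simp)]
  simp [unitVec]

lemma planeWave_injective :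
    Function.Injective (planeWave : Torus L → AddChar (Torus L) ℂ) := fun p q h => by
  funext i
  apply ZMod.injective_stdAddChar
  rw [← planeWave_unitVec, h, planeWave_unitVec]

lemma sum_planeWave (x : Torus L) :
    ∑ p, planeWave p x = if x = 0 then (Fintype.card (Torus L) : ℂ) else 0 := by
  classical
  have h : planeWave x = 0 ↔ x = 0 := by rw [← planeWave_zero, planeWave_injective.eq_iff]
  simp only [planeWave_comm _ x, AddChar.sum_eq_ite, h]

end PlaneWave

section Fourier

variable {L : Fin 3 → ℕ} [∀ i, NeZero (L i)]

/-- The unnormalised discrete Fourier transform of a real field on the torus. -/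
def torusFourier : (Torus L → ℝ) →ₗ[ℝ] Torus L → ℂ where
  toFun φ p := ∑ x, (φ x : ℂ) * planeWave p x
  map_add' φ ψ := by
    ext p
    simp [add_mul, Finset.sum_add_distrib]
  map_smul' r φ := by
    ext p
    simp [mul_assoc, Finset.mul_sum]

lemma torusFourier_apply (φ : Torus L → ℝ) (p : Torus L) :
    torusFourier φ p = ∑ x, (φ x : ℂ) * planeWave p x := rfl

lemma torusFourier_apply_zero (φ : Torus L → ℝ) : torusFourier φ 0 = ((∑ x, φ x : ℝ) : ℂ) := by
  simp [torusFourier_apply, planeWave_zero]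

lemma torusFourier_single (j p : Torus L) : torusFourier (Pi.single j 1) p = planeWave p j := by
  simp [torusFourier_apply, Pi.single_apply, apply_ite Complex.ofReal, ite_mul]

lemma torusFourier_translate (φ : Torus L → ℝ) (e p : Torus L) :
    torusFourier (fun x => φ (x + e)) p = planeWave p (-e) * torusFourier φ p := by
  rw [torusFourier_apply, torusFourier_apply, Finset.mul_sum,
    ← Equiv.sum_comp (Equiv.addRight e) fun x => planeWave p (-e) * (φ x * planeWave p x)]
  refine Finset.sum_congr rfl fun x _ => ?_
  have h : planeWave p x = planeWave p (-e) * planeWave p (x + e) := by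
    rw [← AddChar.map_add_eq_mul, neg_add_cancel_comm_assoc]
  rw [Equiv.coe_addRight, h]
  ring

lemma parseval_torusFourier (φ ψ : Torus L → ℝ) :
    ∑ p, torusFourier φ p * conj (torusFourier ψ p) =
      ((Fintype.card (Torus L) * (φ ⬝ᵥ ψ) : ℝ) : ℂ) := by
  have expand (p : Torus L) : torusFourier φ p * conj (torusFourier ψ p) =
      ∑ x, ∑ y, (φ x * ψ y : ℂ) * planeWave p (x - y) := by
    simp only [torusFourier_apply, map_sum, map_mul, Complex.conj_ofReal, Finset.sum_mul_sum,
      sub_eq_add_neg, AddChar.map_add_eq_mul, AddChar.map_neg_eq_conj]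
    exact Finset.sum_congr rfl fun x _ => Finset.sum_congr rfl fun y _ => by ring
  calc ∑ p, torusFourier φ p * conj (torusFourier ψ p)
      = ∑ x, ∑ y, (φ x * ψ y : ℂ) * ∑ p, planeWave p (x - y) := by
        simp only [expand, Finset.mul_sum]
        rw [Finset.sum_comm]
        exact Finset.sum_congr rfl fun x _ => Finset.sum_comm
    _ = ((Fintype.card (Torus L) * (φ ⬝ᵥ ψ) : ℝ) : ℂ) := by
        simp [sum_planeWave, sub_eq_zero, dotProduct, Finset.mul_sum, mul_comm]

lemma torusFourier_injective :
    Function.Injective (torusFourier : (Torus L → ℝ) →ₗ[ℝ] Torus L → ℂ) := by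
  refine (injective_iff_map_eq_zero _).2 fun φ hφ => ?_
  have h := parseval_torusFourier φ φ
  simp only [hφ, Pi.zero_apply, zero_mul, Finset.sum_const_zero] at h
  exact dotProduct_self_eq_zero.1 <| (mul_eq_zero.1 (Complex.ofReal_eq_zero.1 h.symm)).resolve_left
    (Nat.cast_ne_zero.2 Fintype.card_ne_zero)

end Fourier

section MassiveOperator

/-- The massive lattice operator `-sΔ + m`. -/
def massiveOp (L : Fin 3 → ℕ) (s m : ℝ) : Matrix (Torus L) (Torus L) ℝ := s • (-lap L) + m • 1

variable {L : Fin 3 → ℕ} [∀ i, NeZero (L i)] {s m : ℝ}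

/-- The eigenvalue of `-Δ` on the plane wave of momentum `p`, written with
`2 - 2 cos θ = |exp (iθ) - 1| ^ 2`. -/
def lapSymbol (p : Torus L) : ℝ := ∑ i, ‖(ZMod.stdAddChar (p i) : ℂ) - 1‖ ^ 2

lemma neg_lap_mulVec (φ : Torus L → ℝ) :
    (-lap L) *ᵥ φ = ∑ i, ((2 : ℝ) • φ - (fun x => φ (x + unitVec L i)) -
      fun x => φ (x + -unitVec L i)) := by
  ext x
  rw [Matrix.neg_mulVec, Pi.neg_apply]
  simp only [Matrix.mulVec, dotProduct, lap, Matrix.of_apply,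
    sub_mul, Finset.sum_mul, add_mul, ite_mul, one_mul, zero_mul, Finset.sum_sub_distrib]
  rw [Finset.sum_comm]
  simp [Finset.sum_add_distrib, ← sub_eq_add_neg]
  ring

lemma ofReal_norm_stdAddChar_sub_one_sq {n : ℕ} [NeZero n] (q : ZMod n) :
    ((‖(ZMod.stdAddChar q : ℂ) - 1‖ ^ 2 : ℝ) : ℂ) =
      2 - ZMod.stdAddChar (-q) - ZMod.stdAddChar q := by
  have h : ZMod.stdAddChar q * conj (ZMod.stdAddChar q : ℂ) = 1 := by
    simp [Complex.mul_conj']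
  rw [Complex.ofReal_pow, ← Complex.mul_conj', AddChar.map_neg_eq_conj, map_sub, map_one]
  linear_combination h

lemma torusFourier_neg_lap (φ : Torus L → ℝ) (p : Torus L) :
    torusFourier ((-lap L) *ᵥ φ) p = lapSymbol p * torusFourier φ p := by
  simp only [neg_lap_mulVec, map_sum, map_sub, map_smul, Finset.sum_apply, Pi.sub_apply,
    Pi.smul_apply, torusFourier_translate, neg_neg, AddChar.map_neg_eq_conj, planeWave_unitVec,
    lapSymbol, Complex.ofReal_sum, ofReal_norm_stdAddChar_sub_one_sq, Finset.sum_mul,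
    Complex.real_smul]
  refine Finset.sum_congr rfl fun i _ => ?_
  push_cast
  ring

lemma torusFourier_massiveOp (s m : ℝ) (φ : Torus L → ℝ) (p : Torus L) :
    torusFourier (massiveOp L s m *ᵥ φ) p =
      ((s * lapSymbol p + m : ℝ) : ℂ) * torusFourier φ p := by
  rw [massiveOp, Matrix.add_mulVec, Matrix.smul_mulVec, Matrix.smul_mulVec, Matrix.one_mulVec,
    map_add, map_smul, map_smul, Pi.add_apply, Pi.smul_apply, Pi.smul_apply, torusFourier_neg_lap,
    Complex.real_smul, Complex.real_smul]
  push_cast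
  ring

lemma lapSymbol_nonneg (p : Torus L) : 0 ≤ lapSymbol p :=
  Finset.sum_nonneg fun _ _ => sq_nonneg _

lemma massiveOp_symbol_pos (hs : 0 ≤ s) (hm : 0 < m) (p : Torus L) : 0 < s * lapSymbol p + m :=
  add_pos_of_nonneg_of_pos (mul_nonneg hs (lapSymbol_nonneg p)) hm

lemma isUnit_det_massiveOp (hs : 0 ≤ s) (hm : 0 < m) : IsUnit (massiveOp L s m).det := by
  rw [← Matrix.isUnit_iff_isUnit_det, ← Matrix.mulVec_injective_iff_isUnit]
  intro φ ψ h
  refine torusFourier_injective (funext fun p => ?_)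
  have hp : (massiveOp L s m *ᵥ φ) = massiveOp L s m *ᵥ ψ := h
  replace hp := congr_fun (congr_arg torusFourier hp) p
  rw [torusFourier_massiveOp, torusFourier_massiveOp] at hp
  exact mul_left_cancel₀ (Complex.ofReal_ne_zero.2 (massiveOp_symbol_pos hs hm p).ne') hp

lemma torusFourier_inv_massiveOp (hs : 0 ≤ s) (hm : 0 < m) (u : Torus L → ℝ) (p : Torus L) :
    torusFourier ((massiveOp L s m)⁻¹ *ᵥ u) p =
      torusFourier u p / ((s * lapSymbol p + m : ℝ) : ℂ) := by
  rw [eq_div_iff (Complex.ofReal_ne_zero.2 (massiveOp_symbol_pos hs hm p).ne'), mul_comm,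
    ← torusFourier_massiveOp, Matrix.mulVec_mulVec,
    Matrix.mul_nonsing_inv _ (isUnit_det_massiveOp hs hm), Matrix.one_mulVec]

lemma qf_inv_massiveOp (hs : 0 ≤ s) (hm : 0 < m) (u : Torus L → ℝ) :
    qf L (massiveOp L s m)⁻¹ u =
      (Fintype.card (Torus L) : ℝ)⁻¹ * ∑ p, ‖torusFourier u p‖ ^ 2 / (s * lapSymbol p + m) := by
  have h := parseval_torusFourier u ((massiveOp L s m)⁻¹ *ᵥ u)
  simp only [torusFourier_inv_massiveOp hs hm, map_div₀, Complex.conj_ofReal, mul_div_assoc',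
    Complex.mul_conj'] at h
  rw [qf, eq_inv_mul_iff_mul_eq₀ (Nat.cast_ne_zero.2 Fintype.card_ne_zero)]
  exact_mod_cast h.symm

lemma Cf_eq_inv_massiveOp (W : ℕ) {E : ℝ} (hE : 0 < mr2 E) (f : ℝ) :
    Cf L W E f = (massiveOp L ((W : ℝ) ^ 2) ((1 - f) * mr2 E))⁻¹ := by
  have hC : (Cmat L W E)⁻¹ = massiveOp L ((W : ℝ) ^ 2) (mr2 E) :=
    Matrix.nonsing_inv_nonsing_inv _ (isUnit_det_massiveOp (sq_nonneg _) hE)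
  rw [Cf, hC, massiveOp, massiveOp, add_sub_assoc, ← sub_smul, sub_mul, one_mul]

end MassiveOperator

section NonzeroModes

variable {N : ℕ} [NeZero N]

lemma sum_zdist_le_of_antitone {f : ℕ → ℝ} (hf : Antitone f) (hf₀ : ∀ k, 0 ≤ f k) :
    ∑ q : ZMod N, f (zdist q) ≤ 2 * ∑ k ∈ Finset.range N, f k := by
  have sum_val (g : ℕ → ℝ) : ∑ q : ZMod N, g q.val = ∑ k ∈ Finset.range N, g k := by
    obtain ⟨n, rfl⟩ := Nat.exists_eq_succ_of_ne_zero (NeZero.ne N)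
    exact Fin.sum_univ_eq_sum_range g (n + 1)
  have hq (q : ZMod N) : f (zdist q) ≤ f q.val + f (N - 1 - q.val) := by
    rw [zdist]
    rcases min_choice q.val (N - q.val) with h | h <;> rw [h]
    · exact le_add_of_nonneg_right (hf₀ _)
    · exact le_add_of_nonneg_of_le (hf₀ _) (hf (by omega))
  calc ∑ q : ZMod N, f (zdist q) ≤ ∑ q : ZMod N, (f q.val + f (N - 1 - q.val)) :=
        Finset.sum_le_sum fun q _ => hq q
    _ = 2 * ∑ k ∈ Finset.range N, f k := by
        rw [Finset.sum_add_distrib, sum_val, sum_val fun k => f (N - 1 - k),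
          Finset.sum_range_reflect, two_mul]

lemma sum_prod_zdist_rpow_le :
    ∑ p : Torus fun _ => N, ∏ i, ((zdist (p i) : ℝ) + 1) ^ (-(2 / 3) : ℝ) ≤ 216 * N := by
  have hanti : Antitone fun k : ℕ => ((k : ℝ) + 1) ^ (-(2 / 3) : ℝ) := fun k l hkl =>
    Real.rpow_le_rpow_of_nonpos (by positivity) (by gcongr) (by norm_num)
  have hrange : ∑ k ∈ Finset.range N, ((k : ℝ) + 1) ^ (-(2 / 3) : ℝ) ≤
      3 * (N : ℝ) ^ (1 / 3 : ℝ) := by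
    convert sum_range_rpow_sub_one_le (r := 1 / 3) (by norm_num) (by norm_num) N using 1
    · norm_num
    · ring
  have hsum : ∑ q : ZMod N, ((zdist q : ℝ) + 1) ^ (-(2 / 3) : ℝ) ≤ 6 * (N : ℝ) ^ (1 / 3 : ℝ) :=
    (sum_zdist_le_of_antitone hanti fun _ => by positivity).trans (by linarith)
  calc ∑ p : Torus fun _ => N, ∏ i, ((zdist (p i) : ℝ) + 1) ^ (-(2 / 3) : ℝ)
      = (∑ q : ZMod N, ((zdist q : ℝ) + 1) ^ (-(2 / 3) : ℝ)) ^ 3 := by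
        rw [← Fin.prod_const, Finset.prod_univ_sum, Fintype.piFinset_univ]
    _ ≤ (6 * (N : ℝ) ^ (1 / 3 : ℝ)) ^ 3 := by gcongr
    _ = 216 * N := by
        rw [mul_pow, ← Real.rpow_mul_natCast (by positivity)]
        norm_num

lemma two_mul_zdist_le_sin (q : ZMod N) :
    2 * (zdist q : ℝ) ≤ N * Real.sin (Real.pi * (q.val / N)) := by
  have hN : (0 : ℝ) < N := Nat.cast_pos.2 (NeZero.pos N)
  have jordan {y : ℝ} (h₀ : 0 ≤ y) (h₁ : 2 * y ≤ N) :
      2 * y ≤ N * Real.sin (Real.pi * (y / N)) := by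
    have hy : y / N ≤ 1 / 2 := by rw [div_le_iff₀ hN]; linarith
    calc 2 * y = N * (2 / Real.pi * (Real.pi * (y / N))) := by field_simp
      _ ≤ N * Real.sin (Real.pi * (y / N)) := by
        gcongr
        exact Real.mul_le_sin (by positivity) (by nlinarith [Real.pi_pos])
  have hsub : ((N - q.val : ℕ) : ℝ) = N - q.val := Nat.cast_sub q.val_lt.le
  have hsin : Real.sin (Real.pi * (q.val / N)) = Real.sin (Real.pi * ((N - q.val : ℕ) / N)) := by
    rw [← Real.sin_pi_sub, hsub]
    congr 1
    field_simp
  rcases le_total (2 * (q.val : ℝ)) N with h | h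
  · refine le_trans ?_ (jordan (Nat.cast_nonneg _) h)
    gcongr
    exact min_le_left _ _
  · rw [hsin]
    refine le_trans ?_ (jordan (Nat.cast_nonneg _) (by linarith))
    gcongr
    exact min_le_right _ _

lemma four_mul_zdist_le_norm (q : ZMod N) :
    4 * (zdist q : ℝ) ≤ N * ‖(ZMod.stdAddChar q : ℂ) - 1‖ := by
  have chord : ‖(ZMod.stdAddChar q : ℂ) - 1‖ = |2 * Real.sin (Real.pi * (q.val / N))| := by
    rw [ZMod.stdAddChar_apply, ZMod.toCircle_eq_circleExp, Circle.coe_exp, mul_comm,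
      Complex.norm_exp_I_mul_ofReal_sub_one, Real.norm_eq_abs]
    congr 3
    ring
  calc 4 * (zdist q : ℝ) ≤ N * (2 * Real.sin (Real.pi * (q.val / N))) := by
        linarith [two_mul_zdist_le_sin q]
    _ ≤ N * ‖(ZMod.stdAddChar q : ℂ) - 1‖ := by
        rw [chord]
        gcongr
        exact le_abs_self _

lemma sixteen_mul_sum_sq_zdist_le_lapSymbol (p : Torus fun _ => N) :
    16 * ∑ i, (zdist (p i) : ℝ) ^ 2 ≤ (N : ℝ) ^ 2 * lapSymbol p := by
  rw [lapSymbol, Finset.mul_sum, Finset.mul_sum]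
  refine Finset.sum_le_sum fun i _ => ?_
  calc 16 * (zdist (p i) : ℝ) ^ 2 = (4 * zdist (p i)) ^ 2 := by ring
    _ ≤ (N * ‖(ZMod.stdAddChar (p i) : ℂ) - 1‖) ^ 2 :=
        pow_le_pow_left₀ (by positivity) (four_mul_zdist_le_norm (p i)) 2
    _ = (N : ℝ) ^ 2 * ‖(ZMod.stdAddChar (p i) : ℂ) - 1‖ ^ 2 := mul_pow _ _ _

lemma one_le_sum_sq_zdist {p : Torus fun _ => N} (hp : p ≠ 0) :
    1 ≤ ∑ i, (zdist (p i) : ℝ) ^ 2 := by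
  obtain ⟨i, hi⟩ := Function.ne_iff.1 hp
  have hzdist : 1 ≤ zdist (p i) :=
    le_min (Nat.pos_of_ne_zero ((ZMod.val_ne_zero _).2 hi)) (Nat.sub_pos_of_lt (p i).val_lt)
  calc (1 : ℝ) ≤ (zdist (p i) : ℝ) ^ 2 := one_le_pow₀ (Nat.one_le_cast.2 hzdist)
    _ ≤ ∑ i, (zdist (p i) : ℝ) ^ 2 :=
        Finset.single_le_sum (f := fun i => (zdist (p i) : ℝ) ^ 2) (fun _ _ => sq_nonneg _)
          (Finset.mem_univ i)

lemma sum_inv_lapSymbol_le :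
    ∑ p ∈ Finset.univ.erase (0 : Torus fun _ => N), ((N : ℝ) ^ 2 * lapSymbol p)⁻¹ ≤ 54 * N := by
  have hterm (p : Torus fun _ => N) (hp : p ≠ 0) : ((N : ℝ) ^ 2 * lapSymbol p)⁻¹ ≤
      1 / 4 * ∏ i, ((zdist (p i) : ℝ) + 1) ^ (-(2 / 3) : ℝ) := by
    have hS := one_le_sum_sq_zdist hp
    have hprod := inv_four_mul_sum_sq_le_prod (fun i => Nat.cast_nonneg (zdist (p i))) hS
    rw [Fintype.card_fin, Nat.cast_ofNat] at hprod
    calc ((N : ℝ) ^ 2 * lapSymbol p)⁻¹ ≤ (16 * ∑ i, (zdist (p i) : ℝ) ^ 2)⁻¹ :=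
          inv_anti₀ (by positivity) (sixteen_mul_sum_sq_zdist_le_lapSymbol p)
      _ = 1 / 4 * (4 * ∑ i, (zdist (p i) : ℝ) ^ 2)⁻¹ := by ring
      _ ≤ 1 / 4 * ∏ i, ((zdist (p i) : ℝ) + 1) ^ (-(2 / 3) : ℝ) := by gcongr
  calc ∑ p ∈ Finset.univ.erase (0 : Torus fun _ => N), ((N : ℝ) ^ 2 * lapSymbol p)⁻¹
      ≤ ∑ p ∈ Finset.univ.erase (0 : Torus fun _ => N),
          1 / 4 * ∏ i, ((zdist (p i) : ℝ) + 1) ^ (-(2 / 3) : ℝ) :=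
        Finset.sum_le_sum fun p hp => hterm p (Finset.ne_of_mem_erase hp)
    _ ≤ 1 / 4 * ∑ p : Torus fun _ => N, ∏ i, ((zdist (p i) : ℝ) + 1) ^ (-(2 / 3) : ℝ) := by
        rw [← Finset.mul_sum]
        gcongr
        exact Finset.erase_subset _ _
    _ ≤ 54 * N := by linarith [sum_prod_zdist_rpow_le (N := N)]

end NonzeroModes

section GreenFunction

variable {N : ℕ} [NeZero N] {m : ℝ}

lemma qf_inv_massiveOp_le (hm : 0 < m) {u : Torus (fun _ => N) → ℝ} {B : ℝ}
    (hB : ∀ p, ‖torusFourier u p‖ ≤ B) :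
    qf (fun _ => N) (massiveOp (fun _ => N) ((N : ℝ) ^ 2) m)⁻¹ u ≤
      ((N : ℝ) ^ 3)⁻¹ * ((∑ x, u x) ^ 2 / m + 54 * N * B ^ 2) := by
  have hcard : (Fintype.card (Torus fun _ => N) : ℝ) = (N : ℝ) ^ 3 := by simp [ZMod.card]
  have hzero : ‖torusFourier u 0‖ ^ 2 / ((N : ℝ) ^ 2 * lapSymbol (0 : Torus fun _ => N) + m) =
      (∑ x, u x) ^ 2 / m := by
    simp [torusFourier_apply_zero, lapSymbol, -Complex.ofReal_sum]
  have hmode (p : Torus fun _ => N) (hp : p ≠ 0) :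
      ‖torusFourier u p‖ ^ 2 / ((N : ℝ) ^ 2 * lapSymbol p + m) ≤
        B ^ 2 * ((N : ℝ) ^ 2 * lapSymbol p)⁻¹ := by
    have hpos : 0 < (N : ℝ) ^ 2 * lapSymbol p := by
      linarith [one_le_sum_sq_zdist hp, sixteen_mul_sum_sq_zdist_le_lapSymbol p]
    rw [← div_eq_mul_inv]
    gcongr
    · exact hB p
    · linarith
  rw [qf_inv_massiveOp (sq_nonneg _) hm, hcard]
  gcongr
  rw [← Finset.add_sum_erase _ _ (Finset.mem_univ 0), hzero]
  gcongr
  calc ∑ p ∈ Finset.univ.erase (0 : Torus fun _ => N),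
        ‖torusFourier u p‖ ^ 2 / ((N : ℝ) ^ 2 * lapSymbol p + m)
      ≤ ∑ p ∈ Finset.univ.erase (0 : Torus fun _ => N), B ^ 2 * ((N : ℝ) ^ 2 * lapSymbol p)⁻¹ :=
        Finset.sum_le_sum fun p hp => hmode p (Finset.ne_of_mem_erase hp)
    _ ≤ B ^ 2 * (54 * N) := by
        rw [← Finset.mul_sum]
        gcongr
        exact sum_inv_lapSymbol_le
    _ = 54 * N * B ^ 2 := mul_comm _ _

lemma qf_inv_massiveOp_single_le (hm : 0 < m) (j : Torus fun _ => N) :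
    qf (fun _ => N) (massiveOp (fun _ => N) ((N : ℝ) ^ 2) m)⁻¹ (Pi.single j 1) ≤
      (m⁻¹ + 54) / (N : ℝ) ^ 2 := by
  have hN : (1 : ℝ) ≤ N := Nat.one_le_cast.2 NeZero.one_le
  have hB (p : Torus fun _ => N) : ‖torusFourier (Pi.single j 1) p‖ ≤ 1 := by
    rw [torusFourier_single, AddChar.norm_apply]
  calc _ ≤ ((N : ℝ) ^ 3)⁻¹ * (1 / m + 54 * N) := by simpa using qf_inv_massiveOp_le hm hB
    _ ≤ ((N : ℝ) ^ 3)⁻¹ * (m⁻¹ * N + 54 * N) := by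
        rw [one_div]
        gcongr
        exact le_mul_of_one_le_right (by positivity) hN
    _ = (m⁻¹ + 54) / (N : ℝ) ^ 2 := by field_simp

lemma qf_inv_massiveOp_single_sub_single_le (hm : 0 < m) (j k : Torus fun _ => N) :
    qf (fun _ => N) (massiveOp (fun _ => N) ((N : ℝ) ^ 2) m)⁻¹ (Pi.single j 1 - Pi.single k 1) ≤
      216 / (N : ℝ) ^ 2 := by
  have hN : (N : ℝ) ≠ 0 := NeZero.ne _
  have hB (p : Torus fun _ => N) : ‖torusFourier (Pi.single j 1 - Pi.single k 1) p‖ ≤ 2 := by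
    rw [map_sub, Pi.sub_apply, torusFourier_single, torusFourier_single]
    refine (norm_sub_le _ _).trans_eq ?_
    rw [AddChar.norm_apply, AddChar.norm_apply, one_add_one_eq_two]
  refine (qf_inv_massiveOp_le hm hB).trans_eq ?_
  have hsum : ∑ x, (Pi.single j 1 - Pi.single k 1 : Torus (fun _ => N) → ℝ) x = 0 := by
    simp [Finset.sum_sub_distrib]
  rw [hsum]
  field_simp
  ring

end GreenFunction

section GaussianTail

open ProbabilityTheory

namespace IsCenteredGaussianWithCov

variable {L : Fin 3 → ℕ} [∀ i, NeZero (L i)] {μ : Measure (Torus L → ℝ)}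
  {M : Matrix (Torus L) (Torus L) ℝ}

lemma qf_nonneg (hμ : IsCenteredGaussianWithCov L μ M) (t : Torus L → ℝ) : 0 ≤ qf L M t := by
  have := hμ.1
  have h : ‖_root_.charFun L μ t‖ ≤ 1 := by
    refine (norm_integral_le_of_norm_le_const (C := 1) (ae_of_all _ fun x => ?_)).trans (by simp)
    rw [mul_comm, Complex.norm_exp_ofReal_mul_I]
  rw [hμ.2, Complex.norm_exp, Real.exp_le_one_iff] at h
  simpa using h

lemma map_dotProduct (hμ : IsCenteredGaussianWithCov L μ M) (t : Torus L → ℝ) :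
    μ.map (t ⬝ᵥ ·) = gaussianReal 0 (qf L M t).toNNReal := by
  have := hμ.1
  have hmeas : Measurable (t ⬝ᵥ · : (Torus L → ℝ) → ℝ) := by
    unfold dotProduct
    fun_prop
  have hqf (s : ℝ) : qf L M (s • t) = s ^ 2 * qf L M t := by
    simp only [qf, Matrix.mulVec_smul, smul_dotProduct, dotProduct_smul, smul_eq_mul]
    ring
  refine Measure.ext_of_charFun (funext fun s => ?_)
  rw [MeasureTheory.charFun_apply_real, integral_map hmeas.aemeasurable (by fun_prop)]
  calc ∫ x, Complex.exp (s * (t ⬝ᵥ x : ℝ) * Complex.I) ∂μ = _root_.charFun L μ (s • t) := by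
        refine integral_congr_ae (ae_of_all _ fun x => ?_)
        have hx : ∑ j, (s • t) j * x j = s * (t ⬝ᵥ x) := smul_dotProduct s t x
        simp only [hx, Complex.ofReal_mul, mul_comm Complex.I]
    _ = MeasureTheory.charFun (gaussianReal 0 (qf L M t).toNNReal) s := by
        rw [hμ.2, hqf, charFun_gaussianReal, Real.coe_toNNReal _ (hμ.qf_nonneg t)]
        push_cast
        ring_nf

lemma hasSubgaussianMGF_dotProduct (hμ : IsCenteredGaussianWithCov L μ M) {t : Torus L → ℝ}
    {c : ℝ≥0} (hc : qf L M t ≤ c) : HasSubgaussianMGF (t ⬝ᵥ ·) c μ := by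
  have := hμ.1
  have hmgf (s : ℝ) := mgf_gaussianReal (hμ.map_dotProduct t) s
  refine ⟨fun s => ?_, fun s => ?_⟩
  · rw [← mgf_pos_iff, hmgf]
    exact Real.exp_pos _
  · rw [hmgf, Real.coe_toNNReal _ (hμ.qf_nonneg t), zero_mul, zero_add]
    gcongr

lemma measure_exists_rpow_lt_abs_dotProduct_le {ι : Type*} [Fintype ι]
    (hμ : IsCenteredGaussianWithCov L μ M) {W : ℕ} (hW : 0 < W) {t : ι → Torus L → ℝ}
    (ht : ∀ i, qf L M (t i) ≤ 216 / (W : ℝ) ^ 2) :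
    μ {x | ∃ i, (W : ℝ) ^ (-(1 / 8 : ℝ)) < |t i ⬝ᵥ x|} ≤
      ENNReal.ofReal
        (2 * Fintype.card ι * Real.exp (-(1 / 432) * (W : ℝ) ^ ((7 : ℝ) / 4))) := by
  have := hμ.1
  have hW' : (0 : ℝ) < W := Nat.cast_pos.2 hW
  have hpow : ((W : ℝ) ^ (-(1 / 8 : ℝ))) ^ 2 * (W : ℝ) ^ 2 = (W : ℝ) ^ ((7 : ℝ) / 4) := by
    rw [← Real.rpow_mul_natCast hW'.le, ← Real.rpow_natCast _ 2, ← Real.rpow_add hW']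
    norm_num
  have h := measure_exists_lt_abs_le_of_hasSubgaussianMGF (c := 216 / (W : ℝ≥0) ^ 2)
    (fun i => hμ.hasSubgaussianMGF_dotProduct (by exact_mod_cast ht i))
    (ε := (W : ℝ) ^ (-(1 / 8 : ℝ))) (by positivity)
  have hexp : -((W : ℝ) ^ (-(1 / 8 : ℝ))) ^ 2 / (2 * ((216 / (W : ℝ≥0) ^ 2 : ℝ≥0) : ℝ)) =
      -(1 / 432) * (W : ℝ) ^ ((7 : ℝ) / 4) := by
    rw [← hpow]
    push_cast
    field_simp
    norm_num
  rwa [hexp] at h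

end IsCenteredGaussianWithCov

end GaussianTail

section LargeField

lemma mr2_pos_of_abs_lt_two {E : ℝ} (hE : |E| < 2) : 0 < mr2 E := by
  have := sq_lt_sq' (abs_lt.1 hE).1 (abs_lt.1 hE).2
  rw [mr2]
  linarith

lemma inv_one_sub_mul_mr2_le {E f : ℝ} (hE : |E| ≤ 1.8) (hf : f ≤ 3 / 4) :
    ((1 - f) * mr2 E)⁻¹ ≤ 162 := by
  have hmr : 0.38 ≤ mr2 E := by
    have := sq_le_sq' (abs_le.1 hE).1 (abs_le.1 hE).2
    rw [mr2]
    linarith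
  have hm : 1 / 162 ≤ (1 - f) * mr2 E := by nlinarith
  exact inv_le_of_inv_le₀ (by norm_num) (by simpa using hm)

theorem large_field_probability_general {W : ℕ} {L : Fin 3 → ℕ} [∀ i, NeZero (L i)]
    (hL : ∀ i, L i = W) {E : ℝ} :
    (|E| ≤ 1.8 → ∀ f ≤ (3 / 4 : ℝ), ∀ μ : Measure (Torus L → ℝ),
      IsCenteredGaussianWithCov L μ (Cf L W E f) →
      μ {a : Torus L → ℝ | ∃ j, (W : ℝ) ^ (-(1 / 8 : ℝ)) < |a j|}
        ≤ ENNReal.ofReal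
            (2 * (W : ℝ) ^ 3 * Real.exp (-(1 / 432) * (W : ℝ) ^ ((7 : ℝ) / 4)))) ∧
    (|E| < 2 → ∀ f < (1 : ℝ), ∀ μ : Measure (Torus L → ℝ),
      IsCenteredGaussianWithCov L μ (Cf L W E f) →
      μ {b : Torus L → ℝ | ∃ j j', (W : ℝ) ^ (-(1 / 8 : ℝ)) < |b j - b j'|}
        ≤ ENNReal.ofReal
            (2 * (W : ℝ) ^ 6 * Real.exp (-(1 / 432) * (W : ℝ) ^ ((7 : ℝ) / 4)))) := by
  obtain rfl : L = fun _ => W := funext hL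
  have : NeZero W := ‹∀ i : Fin 3, NeZero W› 0
  have hcard : (Fintype.card (Torus fun _ => W) : ℝ) = (W : ℝ) ^ 3 := by simp [ZMod.card]
  refine ⟨fun hE f hf μ hμ => ?_, fun hE f hf μ hμ => ?_⟩
  · have hmr := mr2_pos_of_abs_lt_two (hE.trans_lt (by norm_num))
    have hm : 0 < (1 - f) * mr2 E := mul_pos (by linarith) hmr
    rw [Cf_eq_inv_massiveOp W hmr] at hμ
    have h := hμ.measure_exists_rpow_lt_abs_dotProduct_le (NeZero.pos W)
      fun j => (qf_inv_massiveOp_single_le hm j).trans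
        (div_le_div_of_nonneg_right (by linarith [inv_one_sub_mul_mr2_le hE hf]) (sq_nonneg _))
    simpa only [single_dotProduct, one_mul, hcard] using h
  · have hmr := mr2_pos_of_abs_lt_two hE
    have hm : 0 < (1 - f) * mr2 E := mul_pos (by linarith) hmr
    rw [Cf_eq_inv_massiveOp W hmr] at hμ
    have h := hμ.measure_exists_rpow_lt_abs_dotProduct_le (NeZero.pos W)
      fun k : (Torus fun _ => W) × (Torus fun _ => W) =>
        qf_inv_massiveOp_single_sub_single_le hm k.1 k.2
    simpa only [sub_dotProduct, single_dotProduct, one_mul, Prod.exists, Fintype.card_prod,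
      Nat.cast_mul, hcard, ← pow_add] using h

end LargeField

/-- Large-field probability estimates for the Gaussian measures with
covariances `C_{f_a}` (with `0 < f_a ≤ 3/4`) and `C_{f_b}` (with `f_b = 1 - W⁻³`). -/
theorem large_field_probability (η : ℝ) (hη : 0 < η) :
    ∃ (W₀ : ℕ) (K c : ℝ), 0 < K ∧ 0 < c ∧
      ∀ (W : ℕ), W₀ ≤ W →
      ∀ (L : Fin 3 → ℕ) [∀ i, NeZero (L i)], (∀ i, L i = W) →
      ∀ E ∈ specI η,
        (∀ fa : ℝ, 0 < fa → fa ≤ 3 / 4 →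
          ∀ μ : Measure (Torus L → ℝ),
            IsCenteredGaussianWithCov L μ (Cf L W E fa) →
            μ {a : Torus L → ℝ | ∃ j, (W : ℝ) ^ (-(1 / 8 : ℝ)) < |a j|}
              ≤ ENNReal.ofReal
                  (K * (W : ℝ) ^ 3 * Real.exp (-c * (W : ℝ) ^ ((7 : ℝ) / 4)))) ∧
        (∀ μ : Measure (Torus L → ℝ),
            IsCenteredGaussianWithCov L μ (Cf L W E (1 - ((W : ℝ) ^ 3)⁻¹)) →
            μ {b : Torus L → ℝ | ∃ j j', (W : ℝ) ^ (-(1 / 8 : ℝ)) < |b j - b j'|}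
              ≤ ENNReal.ofReal
                  (K * (W : ℝ) ^ 6 * Real.exp (-c * (W : ℝ) ^ ((7 : ℝ) / 4)))) := by
  refine ⟨1, 2, 1 / 432, by norm_num, by norm_num, fun W hW L _ hL E hE =>
    ⟨fun fa _ hfa => (large_field_probability_general hL).1 hE.2 fa hfa, ?_⟩⟩
  exact (large_field_probability_general hL).2 (hE.2.trans_lt (by norm_num)) _
    (sub_lt_self _ (by positivity))
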